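/- For every ideal I of R = ℂ[x₁,…,xₙ] and every integer d ≥ 1, the local Hilbert function of I at the origin is computed by successive truncated dual spaces: H_{IR₀}(d) := dim_ℂ R₀/(IR₀ + m^{d+1}) − dim_ℂ R₀/(IR₀ + m^d) = dim_ℂ D₀^d[I] − dim_ℂ D₀^{d−1}[I]. -/

import Mathlib

open MvPolynomial

noncomputable section

/-- The polynomial ring `R = ℂ[x₁,…,xₙ]`. -/
abbrev Rn (n : ℕ) := MvPolynomial (Fin n) ℂ

/-- Total degree of a monomial exponent vector. -/
def mdeg {n : ℕ} (m : Fin n →₀ ℕ) : ℕ := m.sum fun _ e => e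

/-- The truncated dual space `D₀^d`: linear functionals on `R` vanishing on all
monomials of degree greater than `d` (identified with `(R_d)*`). -/
def DualTrunc (n d : ℕ) : Submodule ℂ (Module.Dual ℂ (Rn n)) where
  carrier := {p | ∀ m : Fin n →₀ ℕ, d < mdeg m → p (monomial m 1) = 0}
  add_mem' := by
    intro p q hp hq m hm
    simp [hp m hm, hq m hm]
  zero_mem' := by
    intro m hm
    simp
  smul_mem' := by
    intro c p hp m hm
    simp [hp m hm]

/-- The Macaulay dual space `D₀` at the origin: linear functionals on `R` vanishing
on all monomials of sufficiently large degree, i.e. `⋃ d, D₀^d`. -/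
def MacaulayDual (n : ℕ) : Submodule ℂ (Module.Dual ℂ (Rn n)) where
  carrier := {p | ∃ d : ℕ, ∀ m : Fin n →₀ ℕ, d < mdeg m → p (monomial m 1) = 0}
  add_mem' := by
    rintro p q ⟨d₁, hp⟩ ⟨d₂, hq⟩
    refine ⟨max d₁ d₂, fun m hm => ?_⟩
    simp [hp m (lt_of_le_of_lt (le_max_left _ _) hm),
          hq m (lt_of_le_of_lt (le_max_right _ _) hm)]
  zero_mem' := ⟨0, fun m _ => rfl⟩
  smul_mem' := by
    rintro c p ⟨d, hp⟩
    exact ⟨d, fun m hm => by simp [hp m hm]⟩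

/-- The space of linear functionals annihilating an ideal `I`. -/
def annIdeal {n : ℕ} (I : Ideal (Rn n)) : Submodule ℂ (Module.Dual ℂ (Rn n)) where
  carrier := {p | ∀ f ∈ I, p f = 0}
  add_mem' := by
    intro p q hp hq f hf
    simp [hp f hf, hq f hf]
  zero_mem' := by intro f _; rfl
  smul_mem' := by
    intro c p hp f hf
    simp [hp f hf]

/-- The Macaulay dual space `D₀[I] = {p ∈ D₀ : p(f) = 0 for all f ∈ I}`. -/
def dualOf {n : ℕ} (I : Ideal (Rn n)) : Submodule ℂ (Module.Dual ℂ (Rn n)) :=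
  MacaulayDual n ⊓ annIdeal I

/-- The truncated dual space `D₀^d[I] = D₀[I] ∩ D₀^d`. -/
def truncDualOf {n : ℕ} (I : Ideal (Rn n)) (d : ℕ) : Submodule ℂ (Module.Dual ℂ (Rn n)) :=
  DualTrunc n d ⊓ annIdeal I

/-- The contraction `IR₀ ∩ R` of the extension of `I` to the localization at the
origin: `{g ∈ R : ∃ h ∈ R with h(0) ≠ 0 and h·g ∈ I}`. -/
def contraction {n : ℕ} (I : Ideal (Rn n)) : Set (Rn n) :=
  {g | ∃ h : Rn n, eval (0 : Fin n → ℂ) h ≠ 0 ∧ h * g ∈ I}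

/-- The maximal ideal `m = ⟨x₁,…,xₙ⟩` at the origin, as the kernel of evaluation at `0`. -/
def mIdeal (n : ℕ) : Ideal (Rn n) := RingHom.ker (eval (0 : Fin n → ℂ))

instance (n : ℕ) : (mIdeal n).IsPrime := RingHom.ker_isPrime _

/-- The localization `R₀` of `R` at the maximal ideal of the origin. -/
abbrev Loc (n : ℕ) := Localization.AtPrime (mIdeal n)

/-- The extension `JR₀` of an ideal `J ⊆ R` to the localization `R₀`. -/
def extIdeal {n : ℕ} (J : Ideal (Rn n)) : Ideal (Loc n) :=
  J.map (algebraMap (Rn n) (Loc n))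

/-- Differentiation `σ_f : D₀ → D₀` by `f ∈ R`, `(σ_f p)(g) = p (f * g)`. -/
def sigma {n : ℕ} (f : Rn n) : Module.Dual ℂ (Rn n) →ₗ[ℂ] Module.Dual ℂ (Rn n) :=
  (LinearMap.mulLeft ℂ f).dualMap

/-- A graded monomial order on exponent vectors in `ℕⁿ`: a strict total order
compatible with addition and refining total degree. -/
structure IsGradedMonomialOrder {n : ℕ} (lt : (Fin n →₀ ℕ) → (Fin n →₀ ℕ) → Prop) : Prop where
  irrefl : ∀ a, ¬ lt a a
  trans : ∀ a b c, lt a b → lt b c → lt a c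
  total : ∀ a b, a ≠ b → lt a b ∨ lt b a
  add_compat : ∀ a b c, lt a b → lt (a + c) (b + c)
  deg_compat : ∀ a b, mdeg a < mdeg b → lt a b

/-- `β` is the lead monomial of `g` for the graded local order associated to `lt`:
the `lt`-minimal monomial of `g` with nonzero coefficient. -/
def IsLeadMonomial {n : ℕ} (lt : (Fin n →₀ ℕ) → (Fin n →₀ ℕ) → Prop)
    (g : Rn n) (β : Fin n →₀ ℕ) : Prop :=
  coeff β g ≠ 0 ∧ ∀ γ : Fin n →₀ ℕ, coeff γ g ≠ 0 → γ ≠ β → lt β γ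

/-- The initial ideal `in_≥(IR₀) ∩ R`: the monomial ideal of `R` generated by the
lead monomials of nonzero elements of the contraction `IR₀ ∩ R`. -/
def initialIdeal {n : ℕ} (lt : (Fin n →₀ ℕ) → (Fin n →₀ ℕ) → Prop)
    (I : Ideal (Rn n)) : Ideal (Rn n) :=
  Ideal.span {q | ∃ g ∈ contraction I, g ≠ 0 ∧
    ∃ β : Fin n →₀ ℕ, IsLeadMonomial lt g β ∧ q = monomial β 1}

/-- `∂^α` is (up to the scalar `p(x^α)`) the initial term of the dual functional `p`:
`α` is the `lt`-maximal monomial with nonzero coefficient in `p`. -/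
def IsInitialOf {n : ℕ} (lt : (Fin n →₀ ℕ) → (Fin n →₀ ℕ) → Prop)
    (p : Module.Dual ℂ (Rn n)) (α : Fin n →₀ ℕ) : Prop :=
  p (monomial α 1) ≠ 0 ∧ ∀ β : Fin n →₀ ℕ, p (monomial β 1) ≠ 0 → β ≠ α → lt β α

lemma aux_mdeg {n : ℕ} (m : Fin n →₀ ℕ) : mdeg m = m.degree := rfl

lemma aux_mIdeal (n : ℕ) : mIdeal n = idealOfVars (Fin n) ℂ := by
  ext f
  rw [← pow_one (idealOfVars (Fin n) ℂ), mem_pow_idealOfVars_iff']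
  have h : f ∈ mIdeal n ↔ coeff 0 f = 0 := by
    unfold mIdeal
    rw [RingHom.mem_ker, ← MvPolynomial.constantCoeff_eq]
    simp [MvPolynomial.constantCoeff_eq]
  rw [h]
  constructor
  · intro h0 x hx
    have : x = 0 := by
      rw [← Finsupp.degree_eq_zero_iff]; omega
    rw [this, h0]
  · intro h0
    exact h0 0 (by simp)

lemma aux_trunc {n : ℕ} (I : Ideal (Rn n)) (d : ℕ) :
    truncDualOf I d =
      ((I ⊔ mIdeal n ^ (d + 1)).restrictScalars ℂ).dualAnnihilator := by
  rw [aux_mIdeal]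
  ext p
  rw [Submodule.mem_dualAnnihilator]
  constructor
  · rintro ⟨h1, h2⟩ w hw
    obtain ⟨f, hf, g, hg, rfl⟩ := Submodule.mem_sup.1 hw
    rw [map_add, h2 f hf, zero_add, MvPolynomial.as_sum g, map_sum]
    refine Finset.sum_eq_zero fun m hm => ?_
    rw [mem_pow_idealOfVars_iff] at hg
    have h3 := h1 m (hg m hm)
    have : monomial m (coeff m g) = coeff m g • (monomial m (1 : ℂ)) := by
      simp [smul_monomial]
    rw [this, map_smul, h3, smul_zero]
  · intro h
    refine ⟨fun m hm => h _ ?_, fun f hf => h _ ?_⟩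
    · refine Submodule.mem_sup_right (S := I) ?_
      rw [mem_pow_idealOfVars_iff]
      intro x hx
      have := MvPolynomial.support_monomial_subset hx
      rw [Finset.mem_singleton] at this
      subst this
      exact hm
    · exact Submodule.mem_sup_left (S := I) hf

lemma aux_unit {n : ℕ} (J : Ideal (Rn n)) (d : ℕ) (hJ : mIdeal n ^ d ≤ J) (s : Rn n)
    (hs : s ∉ mIdeal n) : ∃ t, 1 - t * s ∈ J := by
  have hmax : (mIdeal n).IsMaximal :=
    RingHom.ker_isMaximal_of_surjective _ fun c => ⟨C c, by simp⟩
  have h1 : Ideal.span {s} ⊔ mIdeal n = ⊤ := by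
    rw [sup_comm]
    exact hmax.1.2 _ (left_lt_sup.2 fun h => hs (h (Ideal.mem_span_singleton_self s)))
  have h2 := Ideal.sup_pow_eq_top (n := d) h1
  obtain ⟨a, ha, b, hb, hab⟩ := Submodule.mem_sup.1 (h2 ▸ Submodule.mem_top : (1 : Rn n) ∈ _)
  obtain ⟨t, rfl⟩ := Ideal.mem_span_singleton'.1 ha
  exact ⟨t, by rw [← hab]; simpa using hJ hb⟩

lemma aux_loc {n : ℕ} (J : Ideal (Rn n)) (d : ℕ) (hJ : mIdeal n ^ d ≤ J) :
    Module.finrank ℂ (Loc n ⧸ extIdeal J) =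
      Module.finrank ℂ (Rn n ⧸ J.restrictScalars ℂ) := by
  let φ : Rn n →ₗ[ℂ] (Loc n ⧸ extIdeal J) :=
    ((Ideal.Quotient.mkₐ ℂ (extIdeal J)).comp
      (IsScalarTower.toAlgHom ℂ (Rn n) (Loc n))).toLinearMap
  have hφ : ∀ r, φ r = Ideal.Quotient.mk (extIdeal J) (algebraMap (Rn n) (Loc n) r) :=
    fun r => rfl
  have hker : LinearMap.ker φ = J.restrictScalars ℂ := by
    ext r
    rw [LinearMap.mem_ker, hφ, Ideal.Quotient.eq_zero_iff_mem, Submodule.restrictScalars_mem]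
    unfold extIdeal
    rw [IsLocalization.algebraMap_mem_map_algebraMap_iff (mIdeal n).primeCompl]
    constructor
    · rintro ⟨s, hs, h⟩
      obtain ⟨t, ht⟩ := aux_unit J d hJ s hs
      have : r = r * (1 - t * s) + t * (s * r) := by ring
      rw [this]
      exact J.add_mem (J.mul_mem_left _ ht) (J.mul_mem_left _ h)
    · intro h
      exact ⟨1, Submonoid.one_mem _, by simpa using h⟩
  have hsurj : Function.Surjective φ := by
    intro y
    obtain ⟨x, rfl⟩ := Ideal.Quotient.mk_surjective y
    obtain ⟨r, s, rfl⟩ := IsLocalization.exists_mk'_eq (mIdeal n).primeCompl x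
    obtain ⟨t, ht⟩ := aux_unit J d hJ s s.2
    refine ⟨r * t, ?_⟩
    rw [hφ, eq_comm, Ideal.Quotient.eq]
    have : IsLocalization.mk' (Loc n) r s - algebraMap (Rn n) (Loc n) (r * t)
        = IsLocalization.mk' (Loc n) r s * algebraMap (Rn n) (Loc n) (1 - t * s) := by
      have h := IsLocalization.mk'_spec (Loc n) r s
      simp only [map_mul, map_sub, map_one]
      rw [← h]; ring
    rw [this]
    exact Ideal.mul_mem_left _ _ (Ideal.mem_map_of_mem _ ht)
  rw [← hker]
  exact (LinearMap.quotKerEquivOfSurjective φ hsurj).finrank_eq.symm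

lemma aux_main {n : ℕ} (I : Ideal (Rn n)) (d : ℕ) :
    Module.finrank ℂ (Loc n ⧸ (extIdeal I + extIdeal (mIdeal n) ^ (d + 1))) =
      Module.finrank ℂ (truncDualOf I d) := by
  have h : extIdeal I + extIdeal (mIdeal n) ^ (d + 1) =
      extIdeal (I ⊔ mIdeal n ^ (d + 1)) := by
    unfold extIdeal
    rw [Ideal.map_sup, Ideal.map_pow]; rfl
  rw [h, aux_loc _ (d + 1) le_sup_right, aux_trunc, ← Subspace.dual_finrank_eq]
  exact (Submodule.dualQuotEquivDualAnnihilator _).finrank_eq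


/-- For `d ≥ 1`, the local Hilbert function
`H_{IR₀}(d) = dim R₀/(IR₀ + m^{d+1}) − dim R₀/(IR₀ + m^d)` equals
`dim D₀^d[I] − dim D₀^{d−1}[I]`. -/
theorem local_hilbert_function_via_duals (n : ℕ) (I : Ideal (Rn n)) (d : ℕ) (hd : 1 ≤ d) :
    (Module.finrank ℂ (Loc n ⧸ (extIdeal I + extIdeal (mIdeal n) ^ (d + 1))) : ℤ)
        - (Module.finrank ℂ (Loc n ⧸ (extIdeal I + extIdeal (mIdeal n) ^ d)) : ℤ)
      = (Module.finrank ℂ (truncDualOf I d) : ℤ)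
        - (Module.finrank ℂ (truncDualOf I (d - 1)) : ℤ) := by
  obtain ⟨e, rfl⟩ := Nat.exists_eq_add_of_le' hd
  rw [aux_main, aux_main, Nat.add_sub_cancel]
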